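/- There exists an absolute constant C such that for every prime p and every integer α ≥ 1, one has | ∑_{u+v = 2α, u,v ≥ 0} s(p^u, p^v) − p^α | ≤ C p^{α−1}; equivalently, the sum of s(m₁,m₂) over all factorizations p^{2α} = m₁m₂ equals p^α + O(p^{α−1}) uniformly in p and α. -/

import Mathlib

/-- `numSubgroups m₁ m₂` is the number of subgroups of the additive group
`ℤ_{m₁} × ℤ_{m₂}`. -/
noncomputable def numSubgroups (m₁ m₂ : ℕ) : ℕ :=
  Nat.card (AddSubgroup (ZMod m₁ × ZMod m₂))

/-!
A subgroup `H` of `A × B` is determined by its projection `I` to `A`, its intersection `K` with `B`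
and a homomorphism `I → B ⧸ K`. When `A` and `B` are cyclic of orders `m` and `n`, the pairs
`(|I|, [B : K])` run over all pairs of divisors `(d, e)` of `m` and `n`, and there are `gcd d e`
homomorphisms, so that `s(m, n) = ∑_{d ∣ m} ∑_{e ∣ n} gcd d e`. Splitting off the terms with `d = 1`
or `e = 1` gives a recursion from `(p ^ (a + 1), p ^ (b + 1))` to `(p ^ a, p ^ b)`, which sums to
`∑_{u + v = 2α} s(p ^ u, p ^ v) = ∑_{j + k = α} (2j + 1)² p ^ k`. The term `j = 0` is `p ^ α`, and
since `p ≥ 2` the other terms add up to at most `p ^ (α - 1) * ∑_{j ≥ 0} (2j + 3)² / 2 ^ j`.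
-/

open Finset

section Goursat

variable {A B : Type*} [AddGroup A] [AddCommGroup B] {I : AddSubgroup A} {K : AddSubgroup B}

/-- The subgroup of `A × B` that corresponds, as in Goursat's lemma, to a homomorphism
`f : I → B ⧸ K`: the pairs `(a, b)` with `a ∈ I` and `f a = b + K`. -/
def quotientGraph (f : I →+ B ⧸ K) : AddSubgroup (A × B) :=
  (f.graph.comap ((AddMonoidHom.id I).prodMap (QuotientAddGroup.mk' K))).map
    (I.subtype.prodMap (AddMonoidHom.id B))

lemma mem_quotientGraph {f : I →+ B ⧸ K} {a : A} {b : B} :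
    (a, b) ∈ quotientGraph f ↔ ∃ ha : a ∈ I, f ⟨a, ha⟩ = b := by
  simp [quotientGraph, AddMonoidHom.mem_graph]

lemma map_fst_quotientGraph (f : I →+ B ⧸ K) :
    (quotientGraph f).map (AddMonoidHom.fst A B) = I := by
  ext a
  suffices (∃ b, (a, b) ∈ quotientGraph f) ↔ a ∈ I by simpa
  constructor
  · rintro ⟨b, hab⟩
    exact (mem_quotientGraph.1 hab).1
  · intro ha
    obtain ⟨b, hb⟩ := QuotientAddGroup.mk_surjective (f ⟨a, ha⟩)
    exact ⟨b, mem_quotientGraph.2 ⟨ha, hb.symm⟩⟩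

lemma comap_inr_quotientGraph (f : I →+ B ⧸ K) :
    (quotientGraph f).comap (AddMonoidHom.inr A B) = K := by
  ext b
  have f_zero : f ⟨0, I.zero_mem⟩ = 0 := map_zero f
  simp [mem_quotientGraph, f_zero, eq_comm (a := (0 : B ⧸ K))]

lemma quotientGraph_injective : Function.Injective (quotientGraph (I := I) (K := K)) := by
  intro f g hfg
  ext ⟨a, ha⟩
  obtain ⟨b, hb⟩ := QuotientAddGroup.mk_surjective (f ⟨a, ha⟩)
  have hab : (a, b) ∈ quotientGraph g := hfg ▸ mem_quotientGraph.2 ⟨ha, hb.symm⟩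
  rw [← hb, (mem_quotientGraph.1 hab).2]

lemma exists_quotientGraph_eq (H : AddSubgroup (A × B)) :
    ∃ f : H.map (AddMonoidHom.fst A B) →+ B ⧸ H.comap (AddMonoidHom.inr A B),
      quotientGraph f = H := by
  let π := (AddMonoidHom.fst A B).addSubgroupMap H
  have hπ : Function.Surjective π := AddMonoidHom.addSubgroupMap_surjective _ _
  let g := (QuotientAddGroup.mk' (H.comap (AddMonoidHom.inr A B))).comp
    ((AddMonoidHom.snd A B).comp H.subtype)
  have ker_le : π.ker ≤ g.ker := by
    rintro ⟨⟨a, b⟩, hab⟩ h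
    obtain rfl : a = 0 := congrArg Subtype.val h
    simpa [g] using hab
  let f := π.liftOfSurjective hπ ⟨g, ker_le⟩
  have f_eq {a : A} {b : B} (hab : (a, b) ∈ H) (ha) : f ⟨a, ha⟩ = b :=
    π.liftOfRightInverse_comp_apply _ _ ⟨g, ker_le⟩ ⟨(a, b), hab⟩
  refine ⟨f, ?_⟩
  ext ⟨a, b⟩
  rw [mem_quotientGraph]
  constructor
  · rintro ⟨ha, hfab⟩
    obtain ⟨⟨_, b'⟩, hab', rfl⟩ := ha
    have hb : -b' + b ∈ H.comap (AddMonoidHom.inr A B) :=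
      QuotientAddGroup.eq.1 ((f_eq hab' _).symm.trans hfab)
    simpa using H.add_mem hab' hb
  · intro hab
    exact ⟨⟨(a, b), hab, rfl⟩, f_eq hab _⟩

variable (A B) in
theorem quotientGraph_bijective :
    Function.Bijective fun x : Σ (I : AddSubgroup A) (K : AddSubgroup B), I →+ B ⧸ K ↦
      quotientGraph x.2.2 := by
  constructor
  · rintro ⟨I, K, f⟩ ⟨I', K', f'⟩ h
    obtain rfl : I = I' := by
      rw [← map_fst_quotientGraph f, ← map_fst_quotientGraph f']; exact congrArg _ h
    obtain rfl : K = K' := by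
      rw [← comap_inr_quotientGraph f, ← comap_inr_quotientGraph f']; exact congrArg _ h
    obtain rfl : f = f' := quotientGraph_injective h
    rfl
  · intro H
    obtain ⟨f, hf⟩ := exists_quotientGraph_eq H
    exact ⟨⟨_, _, f⟩, hf⟩

variable (A B) in
theorem card_addSubgroup_prod [Finite A] [Finite B] [Fintype (AddSubgroup A)]
    [Fintype (AddSubgroup B)] :
    Nat.card (AddSubgroup (A × B)) =
      ∑ I : AddSubgroup A, ∑ K : AddSubgroup B, Nat.card (I →+ B ⧸ K) := by
  have (I : AddSubgroup A) (K : AddSubgroup B) : Finite (I →+ B ⧸ K) :=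
    .of_injective _ DFunLike.coe_injective
  rw [← Nat.card_congr (Equiv.ofBijective _ (quotientGraph_bijective A B))]
  simp only [Nat.card_sigma]

end Goursat

section Cyclic

variable {A B G M : Type*} [AddGroup A] [IsAddCyclic A] [AddCommGroup B] [IsAddCyclic B] [Finite B]
  [AddCommGroup G] [IsAddCyclic G] [Finite G] [AddCommMonoid M]

variable (A B) in
lemma card_addMonoidHom_of_isAddCyclic :
    Nat.card (A →+ B) = (Nat.card A).gcd (Nat.card B) := by
  let homEquiv : (A →+ B) ≃ (nsmulAddMonoidHom (Nat.card A) : B →+ B).ker :=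
    calc (A →+ B)
      _ ≃ (ZMod (Nat.card A) →+ B) :=
        (zmodAddCyclicAddEquiv ‹IsAddCyclic A›).symm.addMonoidHomCongrLeftEquiv
      _ ≃ {f : ℤ →+ B // f (Nat.card A) = 0} := (ZMod.lift _).symm
      _ ≃ (nsmulAddMonoidHom (Nat.card A) : B →+ B).ker :=
        (zmultiplesHom B).symm.subtypeEquiv fun f ↦ by
          simp [AddMonoidHom.mem_ker, ← map_nsmul]
  rw [Nat.card_congr homEquiv, IsAddCyclic.card_nsmulAddMonoidHom_ker, Nat.gcd_comm]

lemma ker_nsmulAddMonoidHom_card (H : AddSubgroup G) :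
    (nsmulAddMonoidHom (Nat.card H) : G →+ G).ker = H := by
  have le_ker : H ≤ (nsmulAddMonoidHom (Nat.card H) : G →+ G).ker := fun x hx ↦
    congrArg Subtype.val (card_nsmul_eq_zero' (x := (⟨x, hx⟩ : H)))
  refine (AddSubgroup.eq_of_le_of_card_ge le_ker ?_).symm
  rw [IsAddCyclic.card_nsmulAddMonoidHom_ker, Nat.gcd_eq_right H.card_addSubgroup_dvd_card]

variable [Fintype (AddSubgroup G)]

lemma sum_addSubgroup_card (f : ℕ → M) :
    ∑ H : AddSubgroup G, f (Nat.card H) = ∑ d ∈ (Nat.card G).divisors, f d := by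
  refine sum_bij' (fun H _ ↦ Nat.card H) (fun d _ ↦ (nsmulAddMonoidHom d : G →+ G).ker)
    ?_ ?_ ?_ ?_ ?_
  · exact fun H _ ↦ Nat.mem_divisors.2 ⟨H.card_addSubgroup_dvd_card, Nat.card_pos.ne'⟩
  · exact fun d _ ↦ mem_univ _
  · exact fun H _ ↦ ker_nsmulAddMonoidHom_card H
  · intro d hd
    rw [IsAddCyclic.card_nsmulAddMonoidHom_ker, Nat.gcd_eq_right (Nat.dvd_of_mem_divisors hd)]
  · exact fun H _ ↦ rfl

lemma sum_addSubgroup_index (f : ℕ → M) :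
    ∑ H : AddSubgroup G, f H.index = ∑ d ∈ (Nat.card G).divisors, f d :=
  calc ∑ H : AddSubgroup G, f H.index
    _ = ∑ H : AddSubgroup G, f (Nat.card G / Nat.card H) := by
      refine sum_congr rfl fun H _ ↦ ?_
      rw [← H.card_mul_index, Nat.mul_div_cancel_left _ Nat.card_pos]
    _ = ∑ d ∈ (Nat.card G).divisors, f (Nat.card G / d) :=
      sum_addSubgroup_card fun d ↦ f (Nat.card G / d)
    _ = ∑ d ∈ (Nat.card G).divisors, f d := Nat.sum_div_divisors _ _

end Cyclic

theorem card_addSubgroup_prod_of_isAddCyclic (A B : Type*) [AddCommGroup A] [AddCommGroup B]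
    [IsAddCyclic A] [IsAddCyclic B] [Finite A] [Finite B] :
    Nat.card (AddSubgroup (A × B)) =
      ∑ d ∈ (Nat.card A).divisors, ∑ e ∈ (Nat.card B).divisors, d.gcd e := by
  have := Fintype.ofFinite (AddSubgroup A)
  have := Fintype.ofFinite (AddSubgroup B)
  have (K : AddSubgroup B) : IsAddCyclic (B ⧸ K) :=
    isAddCyclic_of_surjective (QuotientAddGroup.mk' K) (QuotientAddGroup.mk'_surjective K)
  calc Nat.card (AddSubgroup (A × B))
    _ = ∑ I : AddSubgroup A, ∑ K : AddSubgroup B, (Nat.card I).gcd K.index := by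
      simp only [card_addSubgroup_prod, card_addMonoidHom_of_isAddCyclic, AddSubgroup.index]
    _ = ∑ I : AddSubgroup A, ∑ e ∈ (Nat.card B).divisors, (Nat.card I).gcd e :=
      sum_congr rfl fun I _ ↦ sum_addSubgroup_index _
    _ = _ := sum_addSubgroup_card fun d ↦ ∑ e ∈ (Nat.card B).divisors, d.gcd e

theorem numSubgroups_eq_sum_gcd (m n : ℕ) [NeZero m] [NeZero n] :
    numSubgroups m n = ∑ d ∈ m.divisors, ∑ e ∈ n.divisors, d.gcd e := by
  rw [numSubgroups, card_addSubgroup_prod_of_isAddCyclic, Nat.card_zmod, Nat.card_zmod]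

lemma numSubgroups_one_left (n : ℕ) [NeZero n] : numSubgroups 1 n = #n.divisors := by
  simp [numSubgroups_eq_sum_gcd]

lemma numSubgroups_one_right (m : ℕ) [NeZero m] : numSubgroups m 1 = #m.divisors := by
  simp [numSubgroups_eq_sum_gcd]

section PrimePower

variable {p : ℕ}

lemma numSubgroups_prime_pow_succ (hp : p.Prime) (a b : ℕ) :
    numSubgroups (p ^ (a + 1)) (p ^ (b + 1)) = p * numSubgroups (p ^ a) (p ^ b) + (a + b + 3) := by
  have : NeZero p := ⟨hp.ne_zero⟩
  simp only [numSubgroups_eq_sum_gcd, Nat.sum_divisors_prime_pow hp]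
  have inner_sum (i : ℕ) : ∑ k ∈ range (b + 1 + 1), (p ^ (i + 1)).gcd (p ^ k) =
      p * ∑ k ∈ range (b + 1), (p ^ i).gcd (p ^ k) + 1 := by
    simp [sum_range_succ' _ (b + 1), pow_succ', Nat.gcd_mul_left, mul_sum]
  have first_row : ∑ k ∈ range (b + 1 + 1), (p ^ 0).gcd (p ^ k) = b + 2 := by simp
  rw [sum_range_succ', first_row]
  simp only [inner_sum, sum_add_distrib, ← mul_sum, sum_const, card_range, smul_eq_mul]
  ring

lemma sum_antidiagonal_numSubgroups_add_two (hp : p.Prime) (n : ℕ) :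
    ∑ x ∈ antidiagonal (n + 2), numSubgroups (p ^ x.1) (p ^ x.2) =
      p * ∑ x ∈ antidiagonal n, numSubgroups (p ^ x.1) (p ^ x.2) + (n + 3) ^ 2 := by
  have : NeZero p := ⟨hp.ne_zero⟩
  have interior : ∑ x ∈ antidiagonal n, numSubgroups (p ^ (x.1 + 1)) (p ^ (x.2 + 1)) =
      p * ∑ x ∈ antidiagonal n, numSubgroups (p ^ x.1) (p ^ x.2) + (n + 1) * (n + 3) := by
    calc _ = ∑ x ∈ antidiagonal n, (p * numSubgroups (p ^ x.1) (p ^ x.2) + (n + 3)) :=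
          sum_congr rfl fun x hx ↦ by
            rw [numSubgroups_prime_pow_succ hp, mem_antidiagonal.1 hx]
      _ = _ := by simp [sum_add_distrib, mul_sum]
  have card_divisors (k : ℕ) : #(p ^ k).divisors = k + 1 := by simp [Nat.divisors_prime_pow hp]
  rw [Nat.sum_antidiagonal_succ, Nat.sum_antidiagonal_succ', interior]
  simp only [pow_zero, numSubgroups_one_left, numSubgroups_one_right, card_divisors]
  ring

theorem sum_antidiagonal_numSubgroups_two_mul (hp : p.Prime) (n : ℕ) :
    ∑ x ∈ antidiagonal (2 * n), numSubgroups (p ^ x.1) (p ^ x.2) =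
      ∑ x ∈ antidiagonal n, (2 * x.1 + 1) ^ 2 * p ^ x.2 := by
  induction n with
  | zero => simp [numSubgroups_one_left]
  | succ n ih =>
    rw [mul_add_one, sum_antidiagonal_numSubgroups_add_two hp, ih, Nat.sum_antidiagonal_succ',
      mul_sum, add_comm]
    congr 1
    · ring
    · exact sum_congr rfl fun x _ ↦ by ring

end PrimePower

lemma sum_antidiagonal_mul_pow_le {c : ℕ → ℝ} {q x : ℝ} (hc : ∀ j, 0 ≤ c j) (hq : 0 < q)
    (hqx : q ≤ x) (hs : Summable fun j ↦ c j / q ^ j) (n : ℕ) :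
    ∑ y ∈ antidiagonal n, c y.1 * x ^ y.2 ≤ (∑' j, c j / q ^ j) * x ^ n := by
  have hx : 0 < x := hq.trans_le hqx
  have term_le (y : ℕ × ℕ) (hy : y ∈ antidiagonal n) :
      c y.1 * x ^ y.2 ≤ c y.1 / q ^ y.1 * x ^ n := by
    rw [← mem_antidiagonal.1 hy, pow_add, ← mul_assoc, div_mul_eq_mul_div]
    gcongr
    rw [le_div_iff₀ (by positivity)]
    gcongr
    exact hc _
  calc ∑ y ∈ antidiagonal n, c y.1 * x ^ y.2
    _ ≤ ∑ y ∈ antidiagonal n, c y.1 / q ^ y.1 * x ^ n := sum_le_sum term_le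
    _ = (∑ j ∈ range (n + 1), c j / q ^ j) * x ^ n := by
      rw [← sum_mul, Nat.sum_antidiagonal_eq_sum_range_succ fun j _ ↦ c j / q ^ j]
    _ ≤ (∑' j, c j / q ^ j) * x ^ n := by
      gcongr
      exact hs.sum_le_tsum _ fun j _ ↦ div_nonneg (hc j) (by positivity)

lemma summable_two_mul_add_three_sq_div_two_pow :
    Summable fun j : ℕ ↦ (2 * j + 3 : ℝ) ^ 2 / 2 ^ j := by
  have hs (k : ℕ) : Summable fun j : ℕ ↦ (j : ℝ) ^ k * (1 / 2) ^ j :=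
    summable_pow_mul_geometric_of_norm_lt_one k (by norm_num)
  refine (((hs 2).mul_left 4).add ((hs 1).mul_left 12)).add ((hs 0).mul_left 9) |>.congr fun j ↦ ?_
  rw [div_pow, one_pow]
  ring

theorem stmt11 : ∃ C : ℝ, ∀ p : ℕ, p.Prime → ∀ α : ℕ, 1 ≤ α →
    |(∑ u ∈ Finset.range (2 * α + 1),
        (numSubgroups (p ^ u) (p ^ (2 * α - u)) : ℝ)) - (p : ℝ) ^ α|
      ≤ C * (p : ℝ) ^ (α - 1) := by
  refine ⟨∑' j : ℕ, (2 * j + 3 : ℝ) ^ 2 / 2 ^ j, fun p hp α hα ↦ ?_⟩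
  obtain ⟨n, rfl⟩ := Nat.exists_eq_add_of_le' hα
  have sum_eq : ∑ u ∈ range (2 * (n + 1) + 1),
      (numSubgroups (p ^ u) (p ^ (2 * (n + 1) - u)) : ℝ) =
        p ^ (n + 1) + ∑ x ∈ antidiagonal n, (2 * x.1 + 3 : ℝ) ^ 2 * p ^ x.2 := by
    rw [← Nat.sum_antidiagonal_eq_sum_range_succ fun u v ↦ (numSubgroups (p ^ u) (p ^ v) : ℝ)]
    have := sum_antidiagonal_numSubgroups_two_mul hp (n + 1)
    rw [Nat.sum_antidiagonal_succ] at this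
    convert congrArg (Nat.cast : ℕ → ℝ) this using 1
    · push_cast; rfl
    · push_cast; ring_nf
  rw [sum_eq, add_sub_cancel_left, abs_of_nonneg (by positivity), Nat.add_sub_cancel]
  exact sum_antidiagonal_mul_pow_le (fun j ↦ by positivity) two_pos (mod_cast hp.two_le)
    summable_two_mul_add_three_sq_div_two_pow n
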